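/- arXiv:2312.10360 — 9 statements merged into one kernel-verified Lean document; each statement's English description precedes it below -/
import Mathlib

section
/- Consider a storage system of n nodes and k objects in which object o_i is stored on a nonempty set C_i of nodes, and fix a threshold m ∈ (0,1]. A nonnegative demand vector (ρ_1,…,ρ_k) is m-servable if and only if for every subset I ⊆ {1,…,k} it holds that Σ_{i∈I} ρ_i ≤ m · |⋃_{i∈I} C_i|. -/
/-!
Necessity is double counting: the demand of `I` is served entirely inside the union of its
service choices, each node of which carries load at most `m`.

Sufficiency is Hall's marriage theorem applied to a discretization, followed by a compactness
argument. Cut every node into `N` slots, each of capacity `m / N`, and replace object `i` by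
`⌊N ρ_i / m⌋` unit requests, each of which may use any slot of any node of `C i`. The span
condition implies Hall's condition, so the requests can be given distinct slots
(`exists_slot_assignment`). Counting slots gives an allocation that respects all loads and serves
each demand up to an error `m / N` (`exists_approx_alloc`). The feasible allocations form a
compact set (`isCompact_allocs`), so the demand vectors they serve form a closed set, which
therefore contains `ρ`.
-/

open MeasureTheory Finset

/-- A demand vector `ρ` is `m`-servable for the storage allocation `C` (object `i` is
stored on the set of nodes `C i`) if the demands can be split across service choices
so that every node carries load at most `m`. -/
def Servable {n k : ℕ} (C : Fin k → Finset (Fin n)) (m : ℝ) (ρ : Fin k → ℝ) : Prop :=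
  ∃ x : Fin k → Fin n → ℝ,
    (∀ i u, 0 ≤ x i u) ∧
    (∀ i u, u ∉ C i → x i u = 0) ∧
    (∀ i, ∑ u ∈ C i, x i u = ρ i) ∧
    (∀ u : Fin n, ∑ i ∈ univ.filter (fun i => u ∈ C i), x i u ≤ m)

/-- The allocations that respect the service choices and the load bound `m`, whatever demand they
serve. For `0 ≤ m` the upper bound `x i u ≤ m` follows from the load bound; having it here makes
boundedness immediate. -/
def allocs {n k : ℕ} (C : Fin k → Finset (Fin n)) (m : ℝ) : Set (Fin k → Fin n → ℝ) :=
  {x | (∀ i u, x i u ∈ Set.Icc 0 m) ∧ (∀ i u, u ∉ C i → x i u = 0) ∧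
    ∀ u : Fin n, ∑ i ∈ univ.filter (fun i => u ∈ C i), x i u ≤ m}

lemma isCompact_allocs {n k : ℕ} (C : Fin k → Finset (Fin n)) (m : ℝ) :
    IsCompact (allocs C m) := by
  have hbox : IsCompact (Set.pi Set.univ fun _ : Fin k =>
      Set.pi Set.univ fun _ : Fin n => Set.Icc (0 : ℝ) m) :=
    isCompact_univ_pi fun _ => isCompact_univ_pi fun _ => isCompact_Icc
  refine hbox.of_isClosed_subset ?_ ?_
  · simp only [allocs, Set.mem_Icc, Set.ofPred_and, Set.ofPred_forall]
    refine IsClosed.inter ?_ (IsClosed.inter ?_ ?_)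
    · refine isClosed_iInter fun i => isClosed_iInter fun u => IsClosed.inter ?_ ?_
      · exact isClosed_le (by fun_prop) (by fun_prop)
      · exact isClosed_le (by fun_prop) (by fun_prop)
    · refine isClosed_iInter fun i => isClosed_iInter fun u => isClosed_iInter fun _ => ?_
      exact isClosed_eq (by fun_prop) (by fun_prop)
    · refine isClosed_iInter fun u => ?_
      exact isClosed_le (by fun_prop) (by fun_prop)
  · intro x hx i _ u _
    exact hx.1 i u

/-- Hall's theorem for `a i` requests of object `i` and `N` slots on each node. -/
lemma exists_slot_assignment {n k : ℕ} (C : Fin k → Finset (Fin n)) (a : Fin k → ℕ) (N : ℕ)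
    (h : ∀ I : Finset (Fin k), ∑ i ∈ I, a i ≤ (I.biUnion C).card * N) :
    ∃ f : (Σ i, Fin (a i)) → Fin n × Fin N, Function.Injective f ∧ ∀ s, (f s).1 ∈ C s.1 := by
  classical
  obtain ⟨f, hf, hfC⟩ := (Finset.all_card_le_biUnion_card_iff_exists_injective
    (fun s : (Σ i, Fin (a i)) => C s.1 ×ˢ (univ : Finset (Fin N)))).1 (by
      intro J
      -- Hall's condition is worst when `J` holds all requests of the objects it meets.
      have h1 : J ⊆ (J.image Sigma.fst).sigma (fun i => (univ : Finset (Fin (a i)))) := by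
        intro s hs
        simp only [mem_sigma, mem_univ, and_true]
        exact mem_image_of_mem _ hs
      have h2 : ((J.image Sigma.fst).biUnion C) ×ˢ (univ : Finset (Fin N)) ⊆
          J.biUnion (fun s => C s.1 ×ˢ (univ : Finset (Fin N))) := by
        rintro ⟨u, p⟩ hu
        simp only [mem_product, mem_biUnion, mem_univ, and_true, image_biUnion] at hu ⊢
        exact hu
      calc J.card ≤ _ := card_le_card h1
        _ = ∑ i ∈ J.image Sigma.fst, a i := by simp [card_sigma]
        _ ≤ _ := h _
        _ = _ := by rw [card_product, card_univ, Fintype.card_fin]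
        _ ≤ _ := card_le_card h2)
  exact ⟨f, hf, fun s => (mem_product.1 (hfC s)).1⟩

lemma exists_approx_alloc {n k : ℕ} (C : Fin k → Finset (Fin n)) (m : ℝ) (hm0 : 0 < m)
    (ρ : Fin k → ℝ) (hρ : ∀ i, 0 ≤ ρ i)
    (h : ∀ I : Finset (Fin k), ∑ i ∈ I, ρ i ≤ m * ((I.biUnion C).card : ℝ))
    (N : ℕ) (hN : 0 < N) :
    ∃ x ∈ allocs C m, ∀ i, |∑ u ∈ C i, x i u - ρ i| ≤ m / N := by
  classical
  have hN' : (0 : ℝ) < N := by exact_mod_cast hN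
  have hmN : 0 < m / N := by positivity
  set a : Fin k → ℕ := fun i => ⌊ρ i / (m / N)⌋₊ with ha
  have ha1 : ∀ i, (a i : ℝ) * (m / N) ≤ ρ i := fun i =>
    (le_div_iff₀ hmN).1 (Nat.floor_le (div_nonneg (hρ i) hmN.le))
  have ha2 : ∀ i, ρ i < ((a i : ℝ) + 1) * (m / N) := fun i =>
    (div_lt_iff₀ hmN).1 (Nat.lt_floor_add_one _)
  obtain ⟨f, hf, hfC⟩ := exists_slot_assignment C a N (by
    intro I
    have h1 : (∑ i ∈ I, (a i : ℝ)) * (m / N) ≤ ((I.biUnion C).card * N : ℝ) * (m / N) := by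
      rw [Finset.sum_mul]
      calc _ ≤ ∑ i ∈ I, ρ i := sum_le_sum fun i _ => ha1 i
        _ ≤ _ := h I
        _ = _ := by field_simp
    exact_mod_cast le_of_mul_le_mul_right h1 hmN)
  set c : Fin k → Fin n → ℕ := fun i u =>
    (univ.filter fun p : Fin (a i) => (f ⟨i, p⟩).1 = u).card with hc
  have hcsum : ∀ i, ∑ u ∈ C i, c i u = a i := by
    intro i
    have := card_eq_sum_card_fiberwise (s := (univ : Finset (Fin (a i)))) (t := C i)
      (f := fun p => (f ⟨i, p⟩).1) (fun p _ => hfC ⟨i, p⟩)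
    simpa using this.symm
  have hcC : ∀ i u, u ∉ C i → c i u = 0 := by
    intro i u hu
    refine card_eq_zero.2 (filter_eq_empty_iff.2 fun p _ hp => hu ?_)
    exact hp ▸ hfC ⟨i, p⟩
  have hcload : ∀ u, ∑ i, c i u ≤ N := by
    intro u
    have e : ∑ i, c i u =
        (univ.sigma fun i => univ.filter fun p : Fin (a i) => (f ⟨i, p⟩).1 = u).card := by
      rw [card_sigma]
    rw [e]
    calc _ ≤ (({u} : Finset (Fin n)) ×ˢ (univ : Finset (Fin N))).card := by
          refine card_le_card_of_injOn f ?_ hf.injOn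
          rintro ⟨i, p⟩ hs
          simp at hs ⊢
          exact ⟨(f ⟨i, p⟩).2, Prod.ext hs.symm rfl⟩
      _ = N := by simp
  have hscale : ∀ t : ℕ, t ≤ N → (t : ℝ) * (m / N) ≤ m := by
    intro t ht
    have : (t : ℝ) ≤ N := by exact_mod_cast ht
    calc (t : ℝ) * (m / N) ≤ N * (m / N) := by gcongr
      _ = m := by field_simp
  refine ⟨fun i u => (c i u : ℝ) * (m / N), ⟨?_, ?_, ?_⟩, ?_⟩
  · intro i u
    exact ⟨by positivity, hscale _
      ((single_le_sum (f := fun j => c j u) (fun _ _ => Nat.zero_le _) (mem_univ i)).trans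
        (hcload u))⟩
  · intro i u hu
    simp [hcC i u hu]
  · intro u
    rw [← Finset.sum_mul, ← Nat.cast_sum]
    exact hscale _ ((sum_le_sum_of_subset (filter_subset _ _)).trans (hcload u))
  · intro i
    rw [← Finset.sum_mul, ← Nat.cast_sum, hcsum, abs_le]
    constructor <;> linarith [ha1 i, ha2 i]

/-- A nonnegative demand vector is `m`-servable iff for every subset `I` of objects,
the cumulative demand is at most `m` times the span (cardinality of the union of the
service choices) of the objects in `I`. -/
theorem stmt0 {n k : ℕ} (C : Fin k → Finset (Fin n)) (hC : ∀ i, (C i).Nonempty)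
    (m : ℝ) (hm0 : 0 < m) (hm1 : m ≤ 1) (ρ : Fin k → ℝ) (hρ : ∀ i, 0 ≤ ρ i) :
    Servable C m ρ ↔
      ∀ I : Finset (Fin k), ∑ i ∈ I, ρ i ≤ m * ((I.biUnion C).card : ℝ) := by
  classical
  constructor
  · rintro ⟨x, hx0, hxC, hxρ, hxm⟩ I
    calc ∑ i ∈ I, ρ i = ∑ i ∈ I, ∑ u ∈ I.biUnion C, x i u := by
          refine sum_congr rfl fun i hi => ?_
          rw [← hxρ i]
          exact sum_subset (subset_biUnion_of_mem C hi) fun u _ hu => hxC i u hu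
      _ = ∑ u ∈ I.biUnion C, ∑ i ∈ I, x i u := sum_comm
      _ ≤ ∑ u ∈ I.biUnion C, m := by
          refine sum_le_sum fun u _ => le_trans ?_ (hxm u)
          rw [sum_filter_of_ne fun i _ hi => by_contra fun hu => hi (hxC i u hu)]
          exact sum_le_sum_of_subset_of_nonneg (subset_univ I) fun i _ _ => hx0 i u
      _ = m * ((I.biUnion C).card : ℝ) := by rw [sum_const, nsmul_eq_mul, mul_comm]
  · intro h
    have hclosed : IsClosed
        ((fun (x : Fin k → Fin n → ℝ) i => ∑ u ∈ C i, x i u) '' allocs C m) :=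
      ((isCompact_allocs C m).image (by fun_prop)).isClosed
    have hmem : ρ ∈ (fun (x : Fin k → Fin n → ℝ) i => ∑ u ∈ C i, x i u) '' allocs C m := by
      rw [← hclosed.closure_eq, Metric.mem_closure_iff]
      intro ε hε
      obtain ⟨N, hN⟩ := exists_nat_gt (m / ε)
      have hN' : (0 : ℝ) < N := lt_trans (by positivity) hN
      obtain ⟨x, hx, hxρ⟩ := exists_approx_alloc C m hm0 ρ hρ h N (by exact_mod_cast hN')
      refine ⟨_, ⟨x, hx, rfl⟩, (dist_pi_lt_iff hε).2 fun i => ?_⟩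
      rw [dist_comm, Real.dist_eq]
      exact (hxρ i).trans_lt ((div_lt_comm₀ hε hN').1 hN)
    obtain ⟨x, ⟨hx0, hxC, hxm⟩, hxρ⟩ := hmem
    exact ⟨x, fun i u => (hx0 i u).1, hxC, fun i => congrFun hxρ i, hxm⟩
end

section
/- For any d-choice allocation of n objects on n nodes (each object stored on exactly d distinct nodes) and any t ≥ 1, the cumulative t-overlap satisfies CumOverlap_t ≥ n·binomial(d, t); moreover, if the allocation is balanced (each node stores exactly d distinct objects), then CumOverlap_t = n·binomial(d, t), so balanced allocations attain the minimum over all d-choice allocations. -/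
/-!
Counting pairs `(S, u)` with `u ∈ ⋂_{i ∈ S} C i` node by node instead of subset by subset gives
`CumOverlap t C = ∑ u, (x u).choose t`, where `x u` is the number of objects stored on node `u`
(`cumOverlap_eq_sum_choose`). In the balanced case every `x u` equals `d`, which is the equality.
In general `∑ u, x u = n * d`, so `d` is the mean load, and the lower bound is Jensen's inequality
for the convex sequence `x ↦ x.choose t`: sum over all nodes its supporting line at `d`, of slope
`d.choose (t - 1)` (`choose_supporting_line`).
-/

open Finset

/-- For an allocation of `k` objects with service-choice sets `C i` (the set of nodes
storing object `i`), the cumulative `t`-overlap is the sum, over all `t`-element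
subsets `S` of objects, of the cardinality of the intersection `⋂_{i ∈ S} C i`. -/
def CumOverlap {k ν : ℕ} (t : ℕ) (C : Fin k → Finset (Fin ν)) : ℕ :=
  ∑ S ∈ (univ : Finset (Fin k)).powersetCard t, (S.inf C).card

/-- The supporting line at `d` of the convex sequence `x ↦ x.choose (s + 1)`, namely
`x.choose (s + 1) ≥ d.choose (s + 1) + d.choose s * (x - d)`, rearranged to avoid subtraction.
The slope is the forward difference at `d`. -/
lemma choose_supporting_line (s d x : ℕ) :
    d.choose (s + 1) + d.choose s * x ≤ x.choose (s + 1) + d.choose s * d := by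
  rcases le_total d x with h | h
  · induction x, h using Nat.le_induction with
    | base => exact le_rfl
    | succ x hx ih =>
      have h1 : d.choose s ≤ x.choose s := Nat.choose_le_choose s hx
      rw [Nat.choose_succ_succ x s, mul_add]
      lia
  · induction d, h using Nat.le_induction with
    | base => exact le_rfl
    | succ d hd ih =>
      -- Raising the base point from `d` to `d + 1` also raises the slope, by `k`.
      obtain ⟨k, hk⟩ := Nat.exists_eq_add_of_le (Nat.choose_le_choose s (Nat.le_succ d))
      have h1 : k * x ≤ k * d := Nat.mul_le_mul_left k hd
      rw [Nat.choose_succ_succ d s, Nat.succ_eq_add_one] at *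
      rw [hk]
      nlinarith

/-- Double counting: the node `u` stores every object of a `t`-set `S` exactly when `S` is a
`t`-subset of the objects stored on `u`. -/
lemma cumOverlap_eq_sum_choose {k ν : ℕ} (t : ℕ) (C : Fin k → Finset (Fin ν)) :
    CumOverlap t C = ∑ u : Fin ν, (univ.filter (fun i => u ∈ C i)).card.choose t := by
  have h1 : ∀ S : Finset (Fin k), (S.inf C).card = ∑ u : Fin ν, if u ∈ S.inf C then 1 else 0 := by
    intro S
    simp
  unfold CumOverlap
  simp_rw [h1]
  rw [sum_comm]
  refine sum_congr rfl fun u _ => ?_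
  rw [← card_filter, ← card_powersetCard]
  congr 1
  ext S
  simp only [mem_filter, mem_powersetCard, mem_inf, subset_iff, mem_univ, true_and,
    implies_true]
  exact and_comm

lemma sum_load {k ν d : ℕ} (C : Fin k → Finset (Fin ν)) (hC : ∀ i, (C i).card = d) :
    ∑ u : Fin ν, (univ.filter (fun i => u ∈ C i)).card = k * d := by
  simp_rw [card_filter]
  rw [sum_comm]
  simp [hC]

/-- For any `d`-choice allocation of `n` objects on `n` nodes, the cumulative
`t`-overlap is at least `n * (d.choose t)`; moreover, if the allocation is balanced
(each node stores exactly `d` objects), then equality holds, so balanced allocations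
attain the minimum. -/
theorem stmt4 {n d t : ℕ} (ht : 1 ≤ t) (C : Fin n → Finset (Fin n))
    (hC : ∀ i, (C i).card = d) :
    n * d.choose t ≤ CumOverlap t C ∧
      ((∀ u : Fin n, (univ.filter (fun i => u ∈ C i)).card = d) →
        CumOverlap t C = n * d.choose t) := by
  rw [cumOverlap_eq_sum_choose]
  refine ⟨?_, fun hb => by simp [hb]⟩
  obtain ⟨s, rfl⟩ := Nat.exists_eq_add_of_le' ht
  have h := sum_le_sum fun u (_ : u ∈ (univ : Finset (Fin n))) =>
    choose_supporting_line s d (univ.filter (fun i => u ∈ C i)).card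
  rw [sum_add_distrib, sum_add_distrib, ← mul_sum, sum_load C hC] at h
  simp only [sum_const, card_univ, Fintype.card_fin, smul_eq_mul] at h
  -- Since the mean load is `d`, the linear terms on the two sides agree.
  have h2 : d.choose s * (n * d) = n * (d.choose s * d) := by ring
  lia
end

section
/- For any storage allocation of n objects on nodes with service-choice sets C_1,…,C_n and i.i.d. demands, the robustness satisfies P ≤ min_{1 ≤ t ≤ n} E[F_t(m · span_T)], where T is a uniformly random t-element subset of {1,…,n} chosen independently of the demands, span_T = |⋃_{i∈T} C_i|, and F_t is the CDF of the sum of t i.i.d. demands. -/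
/-!
If a demand vector is servable, then for every set `S` of objects the total demand of `S` is
carried by the nodes of `⋃ i ∈ S, C i`, each of which carries at most `m`; hence
`∑ i ∈ S, ρ i ≤ m * |⋃ i ∈ S, C i|` (`Servable.sum_le`). Under the product measure any `t` distinct
coordinates have joint law `μ^t` (`map_comp_pi`), so for each `t`-subset `S` the robustness is at
most `F_t (m * span_S)` (`measure_servable_le`). Averaging over the `t`-subsets gives the bound.
-/

open MeasureTheory Finset
open scoped ENNReal

/-- The necessary (Hall-type) condition: the demand of `S` fits in the capacity of its nodes. -/
lemma Servable.sum_le {n k : ℕ} {C : Fin k → Finset (Fin n)} {m : ℝ} {ρ : Fin k → ℝ}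
    (h : Servable C m ρ) (S : Finset (Fin k)) :
    ∑ i ∈ S, ρ i ≤ m * ((S.biUnion C).card : ℝ) := by
  obtain ⟨x, hx0, hxC, hxρ, hxm⟩ := h
  calc ∑ i ∈ S, ρ i = ∑ i ∈ S, ∑ u ∈ S.biUnion C, x i u := by
        refine Finset.sum_congr rfl fun i hi => ?_
        rw [← hxρ i]
        exact Finset.sum_subset (Finset.subset_biUnion_of_mem C hi) fun u _ hu => hxC i u hu
    _ = ∑ u ∈ S.biUnion C, ∑ i ∈ S, x i u := Finset.sum_comm
    _ ≤ ∑ _u ∈ S.biUnion C, m := by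
        refine Finset.sum_le_sum fun u _ => le_trans ?_ (hxm u)
        rw [Finset.sum_filter_of_ne fun i _ hne => by_contra fun hu => hne (hxC i u hu)]
        exact Finset.sum_le_sum_of_subset_of_nonneg (Finset.subset_univ S)
          fun i _ _ => hx0 i u
    _ = m * ((S.biUnion C).card : ℝ) := by rw [Finset.sum_const, nsmul_eq_mul, mul_comm]

/-- Distinct coordinates of an i.i.d. vector are jointly distributed as a shorter i.i.d. vector. -/
lemma map_comp_pi {n t : ℕ} (μ : Measure ℝ) [IsProbabilityMeasure μ] (e : Fin t → Fin n)
    (he : Function.Injective e) :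
    (Measure.pi fun _ : Fin n => μ).map (fun ρ j => ρ (e j)) = Measure.pi fun _ : Fin t => μ := by
  have hind := (ProbabilityTheory.iIndepFun_pi (μ := fun _ : Fin n => μ)
    (X := fun _ => (id : ℝ → ℝ)) fun _ => aemeasurable_id).precomp he
  rw [ProbabilityTheory.iIndepFun_iff_map_fun_eq_pi_map
    (fun j => by exact (measurable_pi_apply (e j)).aemeasurable)] at hind
  refine hind.trans ?_
  congr 1
  ext1 j
  exact (measurePreserving_eval (fun _ : Fin n => μ) (e j)).map_eq

lemma measure_servable_le {n t : ℕ} (C : Fin n → Finset (Fin n)) (m : ℝ)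
    (μ : Measure ℝ) [IsProbabilityMeasure μ] (S : Finset (Fin n)) (hS : S.card = t) :
    (Measure.pi fun _ : Fin n => μ) {ρ | Servable C m ρ} ≤
      (Measure.pi fun _ : Fin t => μ) {v | ∑ i, v i ≤ m * ((S.biUnion C).card : ℝ)} := by
  have hmeas : MeasurableSet {v : Fin t → ℝ | ∑ i, v i ≤ m * ((S.biUnion C).card : ℝ)} :=
    measurableSet_le (by fun_prop) measurable_const
  rw [← map_comp_pi μ (S.orderEmbOfFin hS) (S.orderEmbOfFin hS).injective,
    Measure.map_apply (by fun_prop) hmeas]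
  refine measure_mono fun ρ hρ => ?_
  have hsum : ∑ j, ρ (S.orderEmbOfFin hS j) = ∑ i ∈ S, ρ i := by
    conv_rhs => rw [← Finset.map_orderEmbOfFin_univ S hS, Finset.sum_map]
    rfl
  exact hsum.trans_le (Servable.sum_le hρ S)

/-- Upper bound on the robustness of any allocation: for every `1 ≤ t ≤ n`, the robustness
is at most `E[F_t(m ⬝ span_T)]`, where `T` is a uniformly random `t`-element subset of the
objects, `span_T = |⋃_{i ∈ T} C i|`, and `F_t` is the CDF of the sum of `t` i.i.d. demands.
The expectation over `T` is written out as an average over all `t`-subsets. -/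
theorem stmt5 (n : ℕ) (hn : 0 < n) (C : Fin n → Finset (Fin n))
    (m : ℝ) (hm0 : 0 < m) (hm1 : m ≤ 1)
    (μ : Measure ℝ) [IsProbabilityMeasure μ] (hμ : μ (Set.Iio 0) = 0)
    (t : ℕ) (ht : 1 ≤ t) (htn : t ≤ n) :
    (Measure.pi fun _ : Fin n => μ) {ρ | Servable C m ρ} ≤
      (∑ S ∈ (univ : Finset (Fin n)).powersetCard t,
          (Measure.pi fun _ : Fin t => μ)
            {v | ∑ i, v i ≤ m * ((S.biUnion C).card : ℝ)}) /
        (n.choose t : ℝ≥0∞) := by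
  have hc : (n.choose t : ℝ≥0∞) ≠ 0 := by
    exact_mod_cast (Nat.choose_pos htn).ne'
  rw [ENNReal.le_div_iff_mul_le (Or.inl hc) (Or.inl (ENNReal.natCast_ne_top _)), mul_comm]
  have hcard : ((univ : Finset (Fin n)).powersetCard t).card = n.choose t := by
    rw [Finset.card_powersetCard, Finset.card_univ, Fintype.card_fin]
  rw [← hcard, ← nsmul_eq_mul]
  exact Finset.card_nsmul_le_sum _ _ _ fun S hS =>
    measure_servable_le C m μ S (Finset.mem_powersetCard.mp hS).2
end

section
/- Suppose each of the n i.i.d. object demands takes value m·d with probability p and 0 with probability 1−p, and the d-choice allocation is the random design. Then the robustness (the probability, over both the random allocation and the random demands, that the demand vector is m-servable) equals P = E_A[ 1{A·d ≤ n} · ∏_{i=1}^{A−1} binomial(n − i·d, d)/binomial(n, d) ], where A ~ Binomial(n, p) and an empty product equals 1. -/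
/-!
An active object demands `m * d` and sits on only `d` nodes of capacity `m`, so it must saturate
every node of its service set. Hence a demand vector whose active objects form the set `S` is
servable exactly when the sets `C i`, `i ∈ S`, are pairwise disjoint (`servable_demandVec_iff`).

The product measure is carried by the `2 ^ n` vectors `demandVec S`, the one of `S` having mass
`p ^ |S| * (1 - p) ^ (n - |S|)` (`pi_toReal_eq_sum`). The allocations that are disjoint on `S` are
counted by adding one object at a time (`card_disjointAllocs_insert`): given disjoint sets for `S`,
the next object has `(n - |S| * d).choose d` admissible sets out of `n.choose d`. The fraction of
disjoint allocations therefore depends on `|S|` only, and summing over `S` by cardinality gives the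
binomial expectation. The indicator `a * d ≤ n` costs nothing, because otherwise the last factor of
the product vanishes; the factor with index `0` equals `1`.
-/

open MeasureTheory Finset
open scoped ENNReal

/-- The demand vector in which exactly the objects of `S` are active, each with demand `v`. -/
def demandVec {n : ℕ} (v : ℝ) (S : Finset (Fin n)) : Fin n → ℝ := fun i => if i ∈ S then v else 0

lemma servable_demandVec_iff {n d : ℕ} {m : ℝ} (hm : 0 < m) (C : Fin n → Finset (Fin n))
    (hC : ∀ i, (C i).card = d) (S : Finset (Fin n)) :
    Servable C m (demandVec (m * d) S) ↔ (S : Set (Fin n)).PairwiseDisjoint C := by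
  constructor
  · rintro ⟨x, hx0, -, hxs, hxm⟩
    have hle : ∀ i, ∀ u ∈ C i, x i u ≤ m := fun i u hu =>
      (Finset.single_le_sum (f := fun i => x i u) (fun j _ => hx0 j u)
        (Finset.mem_filter.2 ⟨Finset.mem_univ i, hu⟩)).trans (hxm u)
    have heq : ∀ i ∈ S, ∀ u ∈ C i, x i u = m := by
      intro i hi
      refine (Finset.sum_eq_sum_iff_of_le (hle i)).1 ?_
      rw [hxs i, Finset.sum_const, hC i, nsmul_eq_mul]
      simp [demandVec, hi, mul_comm]
    intro i hi j hj hij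
    refine Finset.disjoint_left.2 fun u hui huj => ?_
    -- A common node would carry load at least `2 * m`.
    have h2 : ∑ k ∈ ({i, j} : Finset (Fin n)), x k u ≤ m := by
      refine (Finset.sum_le_sum_of_subset_of_nonneg ?_ fun k _ _ => hx0 k u).trans (hxm u)
      intro k hk
      rcases Finset.mem_insert.1 hk with rfl | hk
      · simpa using hui
      · rw [Finset.mem_singleton.1 hk]; simpa using huj
    rw [Finset.sum_pair hij, heq i hi u hui, heq j hj u huj] at h2
    linarith
  · intro hS
    refine ⟨fun i u => if i ∈ S ∧ u ∈ C i then m else 0, ?_, ?_, ?_, ?_⟩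
    · intro i u
      dsimp only
      split_ifs <;> linarith
    · intro i u hu
      simp [hu]
    · intro i
      by_cases hi : i ∈ S
      · rw [Finset.sum_congr rfl (g := fun _ => m) (fun u hu => by simp [hi, hu])]
        simp [demandVec, hi, hC i, mul_comm]
      · simp [demandVec, hi]
    · intro u
      by_cases h : ∃ i ∈ S, u ∈ C i
      · obtain ⟨i, hi, hu⟩ := h
        rw [Finset.sum_eq_single i]
        · simp [hi, hu]
        · intro j _ hji
          refine if_neg fun hj => ?_
          exact Finset.disjoint_left.1 (hS hj.1 hi hji) hj.2 hu
        · intro hni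
          simp [hu] at hni
      · rw [Finset.sum_eq_zero]
        · exact hm.le
        · intro j _
          exact if_neg fun hj => h ⟨j, hj⟩

/-- The law `p • δ_v + (1 - p) • δ_0` of a single demand charges only the values `v` and `0`, so
the probability of an arbitrary event `T` is a finite sum over the active sets `S`. No
measurability of `T` is needed, since `T` differs by a null set from a finite set. -/
lemma pi_toReal_eq_sum {n : ℕ} {v p : ℝ} (hv : v ≠ 0) (hp0 : 0 ≤ p) (hp1 : p ≤ 1)
    (μ : Measure ℝ)
    (hμ : μ = ENNReal.ofReal p • Measure.dirac v + ENNReal.ofReal (1 - p) • Measure.dirac 0)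
    (T : Set (Fin n → ℝ)) [DecidablePred fun S : Finset (Fin n) => demandVec v S ∈ T] :
    ((Measure.pi fun _ : Fin n => μ) T).toReal =
      ∑ S : Finset (Fin n),
        if demandVec v S ∈ T then p ^ S.card * (1 - p) ^ (n - S.card) else 0 := by
  classical
  have : IsFiniteMeasure μ := by
    constructor
    rw [hμ]
    simp
  have hae : ∀ᵐ y ∂μ, y = v ∨ y = 0 := by
    rw [ae_iff, hμ]
    simp
  have hae' : ∀ᵐ ρ ∂(Measure.pi fun _ : Fin n => μ), ∀ i, ρ i = v ∨ ρ i = 0 :=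
    ae_all_iff.2 fun i =>
      (Measure.tendsto_eval_ae_ae (μ := fun _ : Fin n => μ) (i := i)).eventually hae
  have hinj : Function.Injective (demandVec v : Finset (Fin n) → Fin n → ℝ) := by
    intro S S' h
    ext i
    have := congrFun h i
    by_cases h1 : i ∈ S <;> by_cases h2 : i ∈ S' <;> simp [demandVec, h1, h2, hv, hv.symm] at this ⊢
  have hT : (Measure.pi fun _ : Fin n => μ) T = (Measure.pi fun _ : Fin n => μ)
      (((univ.filter fun S : Finset (Fin n) => demandVec v S ∈ T).image (demandVec v) :
        Finset (Fin n → ℝ)) : Set (Fin n → ℝ)) := by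
    refine measure_congr (Filter.eventuallyEq_set.2 ?_)
    filter_upwards [hae'] with ρ hρ
    refine ⟨fun h => ?_, fun h => ?_⟩
    · have hs : demandVec v (univ.filter fun i => ρ i = v) = ρ := by
        funext i
        rcases hρ i with h | h
        · simp [demandVec, h]
        · simp [demandVec, h, hv.symm]
      refine Finset.mem_coe.2 (Finset.mem_image.2 ⟨univ.filter fun i => ρ i = v, ?_, hs⟩)
      rw [Finset.mem_filter, hs]
      exact ⟨Finset.mem_univ _, h⟩
    · obtain ⟨S, hS, rfl⟩ := Finset.mem_image.1 (Finset.mem_coe.1 h)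
      exact (Finset.mem_filter.1 hS).2
  rw [hT, ← sum_measure_singleton, Finset.sum_image (fun _ _ _ _ h => hinj h),
    ENNReal.toReal_sum (fun S _ => measure_ne_top _ _), Finset.sum_filter]
  refine Finset.sum_congr rfl fun S _ => ?_
  congr 1
  rw [Measure.pi_singleton, ENNReal.toReal_prod]
  have hi : ∀ i, (μ {demandVec v S i}).toReal = if i ∈ S then p else 1 - p := by
    intro i
    rw [hμ]
    by_cases h : i ∈ S
    · simp [demandVec, h, hv.symm, hp0]
    · simp [demandVec, h, hv, hp1]
  simp_rw [hi]
  rw [Finset.prod_ite, Finset.prod_const, Finset.prod_const]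
  have h1 : (univ.filter fun i => i ∈ S) = S := by ext; simp
  have h2 : (univ.filter fun i => i ∉ S) = Sᶜ := by ext; simp
  rw [h1, h2, Finset.card_compl, Fintype.card_fin]

open Classical in
/-- The `d`-choice allocations whose service sets are pairwise disjoint over the objects in `S`. -/
noncomputable def disjointAllocs (n d : ℕ) (S : Finset (Fin n)) :
    Finset (Fin n → Finset (Fin n)) :=
  (Fintype.piFinset fun _ : Fin n => (univ : Finset (Fin n)).powersetCard d).filter
    fun C => (S : Set (Fin n)).PairwiseDisjoint C

lemma mem_disjointAllocs {n d : ℕ} {S : Finset (Fin n)} {C : Fin n → Finset (Fin n)} :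
    C ∈ disjointAllocs n d S ↔
      (∀ i, (C i).card = d) ∧ (S : Set (Fin n)).PairwiseDisjoint C := by
  simp [disjointAllocs, Fintype.mem_piFinset, Finset.mem_powersetCard]

lemma pairwiseDisjoint_update {n : ℕ} {S : Finset (Fin n)} {j : Fin n} (hj : j ∉ S)
    {C : Fin n → Finset (Fin n)} (B : Finset (Fin n))
    (hC : (S : Set (Fin n)).PairwiseDisjoint C) :
    (S : Set (Fin n)).PairwiseDisjoint (Function.update C j B) := by
  intro a ha b hb hab
  have haj : a ≠ j := fun h => hj (h ▸ ha)
  have hbj : b ≠ j := fun h => hj (h ▸ hb)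
  simpa [Function.onFun, haj, hbj] using hC ha hb hab

/-- Pairs of an allocation disjoint on `insert j S` and a free `d`-set `B` correspond, by
exchanging `C j` with `B`, to pairs of an allocation disjoint on `S` and a `d`-set avoiding all its
service sets over `S`. -/
lemma card_disjointAllocs_insert {n d : ℕ} {S : Finset (Fin n)} {j : Fin n} (hj : j ∉ S) :
    (disjointAllocs n d (insert j S)).card * n.choose d =
      (disjointAllocs n d S).card * (n - S.card * d).choose d := by
  classical
  have hR : ((disjointAllocs n d S).sigma fun C =>
      (S.biUnion C)ᶜ.powersetCard d).card =
      (disjointAllocs n d S).card * (n - S.card * d).choose d := by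
    rw [Finset.card_sigma, ← smul_eq_mul, ← Finset.sum_const]
    refine Finset.sum_congr rfl fun C hC => ?_
    obtain ⟨hc, hd⟩ := mem_disjointAllocs.1 hC
    rw [Finset.card_powersetCard, Finset.card_compl, Finset.card_biUnion hd,
      Finset.sum_congr rfl (fun i _ => hc i), Finset.sum_const, Fintype.card_fin, smul_eq_mul]
  have hL : (disjointAllocs n d (insert j S) ×ˢ
      (univ : Finset (Fin n)).powersetCard d).card =
      (disjointAllocs n d (insert j S)).card * n.choose d := by
    rw [Finset.card_product, Finset.card_powersetCard, Finset.card_univ, Fintype.card_fin]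
  rw [← hR, ← hL]
  refine Finset.card_nbij' (fun q => ⟨Function.update q.1 j q.2, q.1 j⟩)
    (fun q => (Function.update q.1 j q.2, q.1 j)) ?_ ?_ ?_ ?_
  · rintro ⟨C, B⟩ h
    simp only [Finset.coe_product, Set.mem_prod, Finset.mem_coe, mem_disjointAllocs,
      Finset.mem_powersetCard, Finset.coe_insert] at h
    obtain ⟨⟨hc, hd⟩, -, hB⟩ := h
    rw [Finset.mem_coe, Finset.mem_sigma]
    refine ⟨mem_disjointAllocs.2 ⟨fun i => ?_, ?_⟩, Finset.mem_powersetCard.2 ⟨?_, hc j⟩⟩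
    · rcases eq_or_ne i j with rfl | hij
      · simpa using hB
      · simpa [hij] using hc i
    · exact pairwiseDisjoint_update hj B (hd.subset (Set.subset_insert _ _))
    · intro u hu
      simp only [Finset.mem_compl, Finset.mem_biUnion, not_exists, not_and]
      intro i hi hui
      have hij : i ≠ j := fun h => hj (h ▸ hi)
      rw [Function.update_of_ne hij] at hui
      exact Finset.disjoint_left.1
        (hd (Set.mem_insert_of_mem _ hi) (Set.mem_insert _ _) hij) hui hu
  · rintro ⟨C, B⟩ h
    rw [Finset.mem_coe, Finset.mem_sigma] at h
    obtain ⟨h1, h2⟩ := h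
    obtain ⟨hc, hd⟩ := mem_disjointAllocs.1 h1
    obtain ⟨hBs, hB⟩ := Finset.mem_powersetCard.1 h2
    simp only [Finset.coe_product, Set.mem_prod, Finset.mem_coe, mem_disjointAllocs,
      Finset.mem_powersetCard, Finset.coe_insert]
    refine ⟨⟨fun i => ?_, ?_⟩, Finset.subset_univ _, hc j⟩
    · rcases eq_or_ne i j with rfl | hij
      · simpa using hB
      · simpa [hij] using hc i
    · refine (Set.pairwiseDisjoint_insert_of_notMem (by simpa using hj)).2
        ⟨pairwiseDisjoint_update hj B hd, fun i hi => ?_⟩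
      have hij : i ≠ j := fun h => hj (h ▸ hi)
      rw [Function.update_self, Function.update_of_ne hij]
      refine Finset.disjoint_left.2 fun u hu hui => ?_
      have := hBs hu
      simp only [Finset.mem_compl, Finset.mem_biUnion, not_exists, not_and] at this
      exact this i hi hui
  · rintro ⟨C, B⟩ _
    simp
  · rintro ⟨C, B⟩ _
    simp

lemma card_disjointAllocs_div {n d : ℕ} (hdn : d ≤ n) (S : Finset (Fin n)) :
    ((disjointAllocs n d S).card : ℝ) / (n.choose d : ℝ) ^ n =
      ∏ i ∈ Finset.range S.card, (((n - i * d).choose d : ℝ) / (n.choose d : ℝ)) := by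
  classical
  have hc : (n.choose d : ℝ) ≠ 0 := by exact_mod_cast (Nat.choose_pos hdn).ne'
  induction S using Finset.induction_on with
  | empty =>
    have : (disjointAllocs n d ∅).card = n.choose d ^ n := by
      simp [disjointAllocs]
    rw [this]
    simp [hc]
  | insert j S hj ih =>
    have h : ((disjointAllocs n d (insert j S)).card : ℝ) * n.choose d =
        (disjointAllocs n d S).card * (n - S.card * d).choose d := by
      exact_mod_cast card_disjointAllocs_insert hj
    rw [Finset.card_insert_of_notMem hj, Finset.prod_range_succ, ← ih, eq_div_of_mul_eq hc h]
    field_simp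

/-- If `n < a * d` the factor with index `a - 1` is zero; otherwise the factor with index `0` is
one and can be dropped. -/
lemma prod_range_eq_ite {n d : ℕ} (hd : 1 ≤ d) (hdn : d ≤ n) (a : ℕ) :
    ∏ i ∈ Finset.range a, (((n - i * d).choose d : ℝ) / (n.choose d : ℝ)) =
      if a * d ≤ n then
        ∏ i ∈ Finset.Icc 1 (a - 1), (((n - i * d).choose d : ℝ) / (n.choose d : ℝ))
      else 0 := by
  have hc : (n.choose d : ℝ) ≠ 0 := by exact_mod_cast (Nat.choose_pos hdn).ne'
  rcases a with _ | b
  · simp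
  split_ifs with h
  · have hI : Finset.range (b + 1) = insert 0 (Finset.Icc 1 (b + 1 - 1)) := by
      ext i
      simp only [Finset.mem_range, Finset.mem_insert, Finset.mem_Icc]
      omega
    rw [hI, Finset.prod_insert (by simp)]
    simp [hc]
  · refine Finset.prod_eq_zero (Finset.self_mem_range_succ b) ?_
    have : n - b * d < d := by
      rw [add_mul, one_mul] at h
      omega
    simp [Nat.choose_eq_zero_of_lt this]

/-- For i.i.d. demands taking value `m*d` with probability `p` and `0` otherwise and the
random design (each object stored on a uniformly random `d`-subset of the `n` nodes,
independently across objects and of the demands), the robustness — here written as the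
average, over all choices of the `n` service-choice sets among `d`-subsets, of the
probability that the demand vector is `m`-servable — equals
`E_A[1{A·d ≤ n} ∏_{i=1}^{A-1} binom(n - i·d, d)/binom(n, d)]` with `A ~ Binomial(n, p)`. -/
theorem stmt7 (n d : ℕ) (hn : 0 < n) (hd : 1 ≤ d) (hdn : d ≤ n)
    (m p : ℝ) (hm0 : 0 < m) (hm1 : m ≤ 1) (hp0 : 0 ≤ p) (hp1 : p ≤ 1)
    (μ : Measure ℝ)
    (hμ : μ = ENNReal.ofReal p • Measure.dirac (m * d) +
            ENNReal.ofReal (1 - p) • Measure.dirac 0) :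
    (∑ C ∈ Fintype.piFinset (fun _ : Fin n => (univ : Finset (Fin n)).powersetCard d),
        ((Measure.pi fun _ : Fin n => μ) {ρ | Servable C m ρ}).toReal) /
        ((n.choose d : ℝ) ^ n) =
      ∑ a ∈ Finset.range (n + 1),
        (n.choose a : ℝ) * p ^ a * (1 - p) ^ (n - a) *
          (if a * d ≤ n then
            ∏ i ∈ Finset.Icc 1 (a - 1), (((n - i * d).choose d : ℝ) / (n.choose d : ℝ))
          else 0) := by
  classical
  have hv : m * (d : ℝ) ≠ 0 := mul_ne_zero hm0.ne' (by exact_mod_cast (by omega : d ≠ 0))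
  have hsum : ∑ C ∈ Fintype.piFinset (fun _ : Fin n => (univ : Finset (Fin n)).powersetCard d),
        ((Measure.pi fun _ : Fin n => μ) {ρ | Servable C m ρ}).toReal =
      ∑ S : Finset (Fin n), p ^ S.card * (1 - p) ^ (n - S.card) *
        ((disjointAllocs n d S).card : ℝ) := by
    simp_rw [pi_toReal_eq_sum hv hp0 hp1 μ hμ]
    rw [Finset.sum_comm]
    refine Finset.sum_congr rfl fun S _ => ?_
    rw [← Finset.sum_filter, Finset.sum_const, nsmul_eq_mul, mul_comm]
    congr 3
    refine Finset.filter_congr fun C hC => ?_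
    have hC' : ∀ i, (C i).card = d := fun i =>
      (Finset.mem_powersetCard.1 (Fintype.mem_piFinset.1 hC i)).2
    exact servable_demandVec_iff hm0 C hC' S
  rw [hsum, Finset.sum_div]
  simp_rw [mul_div_assoc, card_disjointAllocs_div hdn, prod_range_eq_ite hd hdn]
  rw [← Finset.powerset_univ, Finset.sum_powerset_apply_card (fun a =>
    p ^ a * (1 - p) ^ (n - a) * (if a * d ≤ n then
      ∏ i ∈ Finset.Icc 1 (a - 1), (((n - i * d).choose d : ℝ) / (n.choose d : ℝ)) else 0))]
  simp only [Finset.card_univ, Fintype.card_fin, nsmul_eq_mul, mul_assoc]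
end

section
/- In a d-choice allocation with clustering design (d | n), the robustness equals P = F_d(m·d)^{n/d}, where F_d is the CDF of the sum of d i.i.d. demands. -/
/-!
For a nonnegative demand vector, a clustering design can serve it iff
every cluster has total demand at most `m * d`: summing the node constraints over one cluster gives
necessity, and splitting each demand evenly over the `d` nodes of its cluster gives sufficiency
(`servable_iff`). Nonnegativity holds almost surely, so the servable set agrees almost everywhere
with the event that all `n / d` cluster sums are at most `m * d`. Grouping the coordinates by
cluster identifies the product measure on `Fin (k * d) → ℝ` with a `k`-fold product of `d`-fold
products (`map_group_pi`), under which this event is a box with `k` equal sides.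
-/

open MeasureTheory Finset
open scoped ENNReal

/-- Clustering design: `d ∣ n`, nodes and objects are partitioned into `n / d` clusters
of `d` consecutive indices, and each object is stored on every node of its cluster. -/
def ClusteringDesign {n : ℕ} (d : ℕ) (C : Fin n → Finset (Fin n)) : Prop :=
  d ∣ n ∧ ∀ i : Fin n, C i = univ.filter (fun u : Fin n => (u : ℕ) / d = (i : ℕ) / d)

lemma finProdFinEquiv_div {k d : ℕ} (p : Fin k × Fin d) :
    ((finProdFinEquiv p : Fin (k * d)) : ℕ) / d = p.1 := by
  have hd : 0 < d := p.2.pos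
  simp [finProdFinEquiv, Nat.add_mul_div_left _ _ hd, Nat.div_eq_of_lt p.2.isLt]

/-- A sum over one cluster of `d` consecutive indices, rewritten as a sum over the position in the
cluster. -/
lemma sum_cluster {k d : ℕ} (c : Fin k) (f : Fin (k * d) → ℝ) :
    ∑ u ∈ univ.filter (fun u : Fin (k * d) => (u : ℕ) / d = c), f u =
      ∑ j : Fin d, f (finProdFinEquiv (c, j)) := by
  rw [sum_filter, ← finProdFinEquiv.sum_comp, Fintype.sum_prod_type]
  simp only [finProdFinEquiv_div]
  rw [Fintype.sum_eq_single c]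
  · simp
  · intro c' hc'
    simp [Fin.val_inj, hc']

lemma servable_iff {k d : ℕ} (hd : 0 < d) (C : Fin (k * d) → Finset (Fin (k * d)))
    (hC : ∀ i, C i = univ.filter (fun u : Fin (k * d) => (u : ℕ) / d = (i : ℕ) / d))
    (m : ℝ) (ρ : Fin (k * d) → ℝ) (hρ : ∀ i, 0 ≤ ρ i) :
    Servable C m ρ ↔ ∀ c : Fin k, ∑ j : Fin d, ρ (finProdFinEquiv (c, j)) ≤ m * d := by
  have hd' : (0 : ℝ) < d := by exact_mod_cast hd
  have hrow (c : Fin k) (j : Fin d) (f : Fin (k * d) → ℝ) :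
      ∑ u ∈ C (finProdFinEquiv (c, j)), f u = ∑ l : Fin d, f (finProdFinEquiv (c, l)) := by
    rw [hC, finProdFinEquiv_div, sum_cluster]
  have hcol (c : Fin k) (j : Fin d) (f : Fin (k * d) → ℝ) :
      ∑ i ∈ univ.filter (fun i => finProdFinEquiv (c, j) ∈ C i), f i =
        ∑ l : Fin d, f (finProdFinEquiv (c, l)) := by
    rw [← sum_cluster]
    congr 1
    ext i
    simp only [hC, mem_filter, mem_univ, true_and, finProdFinEquiv_div]
    exact eq_comm
  constructor
  · rintro ⟨x, -, -, hx, hm⟩ c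
    calc ∑ j : Fin d, ρ (finProdFinEquiv (c, j))
        = ∑ j : Fin d, ∑ l : Fin d, x (finProdFinEquiv (c, j)) (finProdFinEquiv (c, l)) := by
          simp only [← hx, hrow]
      _ = ∑ l : Fin d, ∑ j : Fin d, x (finProdFinEquiv (c, j)) (finProdFinEquiv (c, l)) :=
          sum_comm
      _ ≤ ∑ _l : Fin d, m := sum_le_sum fun l _ => by
          have := hm (finProdFinEquiv (c, l))
          rwa [hcol] at this
      _ = m * d := by simp [mul_comm]
  · intro h
    refine ⟨fun i u => if u ∈ C i then ρ i / d else 0, fun i u => ?_, fun i u hu => by simp [hu],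
      fun i => ?_, fun u => ?_⟩
    · dsimp only
      split_ifs
      · exact div_nonneg (hρ i) hd'.le
      · exact le_rfl
    · rw [sum_congr rfl fun u hu => if_pos hu]
      obtain ⟨⟨c, j⟩, rfl⟩ := finProdFinEquiv.surjective i
      rw [hrow c j (fun _ => ρ (finProdFinEquiv (c, j)) / d)]
      simp only [sum_const, card_univ, Fintype.card_fin, nsmul_eq_mul]
      field_simp
    · rw [sum_congr rfl fun i hi => if_pos (mem_filter.1 hi).2]
      obtain ⟨⟨c, j⟩, rfl⟩ := finProdFinEquiv.surjective u
      rw [hcol c j (fun i => ρ i / d), ← sum_div, div_le_iff₀ hd']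
      exact h c

/-- Concatenating `k` independent blocks of `d` i.i.d. coordinates gives `k * d` i.i.d.
coordinates. -/
lemma map_group_pi (k d : ℕ) (μ : Measure ℝ) [IsProbabilityMeasure μ] :
    (Measure.pi fun _ : Fin k => Measure.pi fun _ : Fin d => μ).map
      (fun v (i : Fin (k * d)) => v (finProdFinEquiv.symm i).1 (finProdFinEquiv.symm i).2) =
      Measure.pi fun _ : Fin (k * d) => μ := by
  symm
  refine Measure.pi_eq fun s hs => ?_
  rw [Measure.map_apply (by fun_prop) (MeasurableSet.univ_pi hs)]
  have hpre : (fun (v : Fin k → Fin d → ℝ) (i : Fin (k * d)) =>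
      v (finProdFinEquiv.symm i).1 (finProdFinEquiv.symm i).2) ⁻¹' (Set.univ.pi s) =
      Set.univ.pi fun c => Set.univ.pi fun j => s (finProdFinEquiv (c, j)) := by
    ext v
    simp only [Set.mem_preimage, Set.mem_univ_pi]
    rw [finProdFinEquiv.symm.forall_congr_left]
    simp [Prod.forall]
  rw [hpre, Measure.pi_pi]
  simp only [Measure.pi_pi]
  rw [← finProdFinEquiv.prod_comp, Fintype.prod_prod_type]

/-- In a `d`-choice allocation with clustering design (`d ∣ n`), the robustness equals
`F_d(m·d) ^ (n/d)`, where `F_d` is the CDF of the sum of `d` i.i.d. demands. -/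
theorem stmt8 (n d : ℕ) (hn : 0 < n) (hd : 0 < d)
    (C : Fin n → Finset (Fin n)) (hC : ClusteringDesign d C)
    (m : ℝ) (hm0 : 0 < m) (hm1 : m ≤ 1)
    (μ : Measure ℝ) [IsProbabilityMeasure μ] (hμ : μ (Set.Iio 0) = 0) :
    (Measure.pi fun _ : Fin n => μ) {ρ | Servable C m ρ} =
      ((Measure.pi fun _ : Fin d => μ) {v | ∑ i, v i ≤ m * d}) ^ (n / d) := by
  obtain ⟨hdvd, hC⟩ := hC
  obtain ⟨k, rfl⟩ := exists_eq_mul_left_of_dvd hdvd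
  rw [Nat.mul_div_cancel _ hd]
  have hnn : ∀ᵐ ρ ∂(Measure.pi fun _ : Fin (k * d) => μ), ∀ i, 0 ≤ ρ i := by
    rw [ae_all_iff]
    intro i
    have h0 : ∀ᵐ x ∂μ, 0 ≤ x := by
      rw [ae_iff]
      simpa [Set.Iio] using hμ
    exact (measurePreserving_eval (fun _ : Fin (k * d) => μ) i).quasiMeasurePreserving.ae h0
  have hae : {ρ | Servable C m ρ} =ᵐ[Measure.pi fun _ : Fin (k * d) => μ]
      {ρ | ∀ c : Fin k, ∑ j : Fin d, ρ (finProdFinEquiv (c, j)) ≤ m * d} := by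
    filter_upwards [hnn] with ρ hρ
    exact propext (servable_iff hd C hC m ρ hρ)
  have hmeas : MeasurableSet
      {ρ : Fin (k * d) → ℝ | ∀ c : Fin k, ∑ j : Fin d, ρ (finProdFinEquiv (c, j)) ≤ m * d} := by
    simp only [Set.ofPred_forall]
    exact MeasurableSet.iInter fun c => measurableSet_le (by fun_prop) measurable_const
  rw [measure_congr hae, ← map_group_pi, Measure.map_apply (by fun_prop) hmeas]
  have hbox : (fun (v : Fin k → Fin d → ℝ) (i : Fin (k * d)) =>
      v (finProdFinEquiv.symm i).1 (finProdFinEquiv.symm i).2) ⁻¹'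
        {ρ | ∀ c : Fin k, ∑ j : Fin d, ρ (finProdFinEquiv (c, j)) ≤ m * d} =
      Set.univ.pi fun _ : Fin k => {v : Fin d → ℝ | ∑ i, v i ≤ m * d} := by
    ext v
    simp only [Set.mem_preimage, Set.mem_ofPred_eq, Equiv.symm_apply_apply, Set.mem_univ_pi]
  rw [hbox, Measure.pi_pi]
  simp
end

section
/- In any d-choice allocation of n objects on n nodes with i.i.d. demands, the robustness satisfies P ≤ min_{1 ≤ s ≤ n} Pr(S_s^{(c)} ≤ s·m·d), where S_s^{(c)} is the circular s-scan statistic of the demands. -/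
/-!
In a servable demand vector each object sends at most `m` to each of its `d` nodes, because the
total load of a node bounds each nonnegative contribution to it. Hence every demand is at most
`m * d` (`Servable.le_mul`), every window of `s` demands sums to at most `s * m * d`, and the
servability event is contained in the scan event pointwise; monotonicity of measure concludes.
-/

open MeasureTheory Finset
open scoped ENNReal

/-- The circular `s`-scan statistic of `ρ_0, …, ρ_{n-1}`: the maximum over all `i` of
`ρ_i + ρ_{i+1} + ⋯ + ρ_{i+s-1}`, indices taken mod `n`. -/
def circScan {n : ℕ} (s : ℕ) (hn : 0 < n) (ρ : Fin n → ℝ) : ℝ :=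
  univ.sup' (univ_nonempty_iff.mpr ⟨⟨0, hn⟩⟩)
    (fun i : Fin n => ∑ j ∈ range s, ρ ⟨((i : ℕ) + j) % n, Nat.mod_lt _ hn⟩)

theorem Servable.le_mul {n k d : ℕ} {C : Fin k → Finset (Fin n)} {m : ℝ} {ρ : Fin k → ℝ}
    (h : Servable C m ρ) (hC : ∀ i, (C i).card = d) (i : Fin k) : ρ i ≤ m * d := by
  obtain ⟨x, hx0, -, hsum, hload⟩ := h
  have hx : ∀ u ∈ C i, x i u ≤ m := fun u hu =>
    (single_le_sum (f := fun j => x j u) (fun j _ => hx0 j u)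
      (mem_filter.mpr ⟨mem_univ i, hu⟩)).trans (hload u)
  calc ρ i = ∑ u ∈ C i, x i u := (hsum i).symm
    _ ≤ (C i).card • m := sum_le_card_nsmul _ _ _ hx
    _ = m * d := by rw [hC, nsmul_eq_mul, mul_comm]

/-- In any `d`-choice allocation of `n` objects on `n` nodes, for every `1 ≤ s ≤ n`, the
robustness is at most `Pr(S_s^{(c)} ≤ s·m·d)`, where `S_s^{(c)}` is the circular `s`-scan
statistic of the i.i.d. demands; hence `P ≤ min_{1 ≤ s ≤ n} Pr(S_s^{(c)} ≤ s·m·d)`. -/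
theorem stmt11 (n d : ℕ) (hn : 0 < n) (hd : 1 ≤ d)
    (C : Fin n → Finset (Fin n)) (hC : ∀ i, (C i).card = d)
    (m : ℝ) (hm0 : 0 < m) (hm1 : m ≤ 1)
    (μ : Measure ℝ) [IsProbabilityMeasure μ] (hμ : μ (Set.Iio 0) = 0)
    (s : ℕ) (hs : 1 ≤ s) (hsn : s ≤ n) :
    (Measure.pi fun _ : Fin n => μ) {ρ | Servable C m ρ} ≤
      (Measure.pi fun _ : Fin n => μ)
        {ρ | circScan s hn ρ ≤ (s : ℝ) * m * (d : ℝ)} := by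
  refine measure_mono fun ρ (hρ : Servable C m ρ) => ?_
  rw [Set.mem_ofPred_eq, circScan]
  refine sup'_le _ _ fun i _ => ?_
  calc ∑ j ∈ range s, ρ ⟨((i : ℕ) + j) % n, Nat.mod_lt _ hn⟩
      ≤ (range s).card • (m * d) := sum_le_card_nsmul _ _ _ fun _ _ => hρ.le_mul hC _
    _ = (s : ℝ) * m * (d : ℝ) := by rw [card_range, nsmul_eq_mul, mul_assoc]
end

section
/- Let ρ_1,…,ρ_n be i.i.d. nonnegative random variables and 1 ≤ s < n. Then for every x, Pr(S_s > x) ≤ Pr(S_s^{(c)} > x) ≤ (n/(n−s)) · Pr(S_s > x), where S_s is the linear s-scan statistic and S_s^{(c)} the circular s-scan statistic. -/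
/-!
The linear scan statistic is a maximum over a subset of the circular windows, which gives the
first inequality. For the second, rotate the sample by each `k : Fin n`. Rotation preserves the
product measure, so every rotated sample has the same probability of a linear exceedance.
If the circular statistic exceeds `x` because of the window starting at `i`, then the linear
statistic of the sample rotated by `i - t` also exceeds `x` for each `t < n - s`, since that
window now starts at `t`. Hence at least `n - s` of the `n` rotated linear events occur
on the circular event, and integrating this count gives `(n - s) * P(circ) ≤ n * P(lin)`.
-/

open MeasureTheory Finset
open scoped ENNReal

/-- The linear `s`-scan statistic of `ρ_0, …, ρ_{n-1}`: the maximum over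
`0 ≤ i ≤ n - s` of `ρ_i + ⋯ + ρ_{i+s-1}` (no wrap-around; for `s ≤ n` the index
`(i + j) % n` below equals `i + j`). -/
def linScan {n : ℕ} (s : ℕ) (hn : 0 < n) (ρ : Fin n → ℝ) : ℝ :=
  (range (n - s + 1)).sup' (nonempty_range_iff.mpr (Nat.succ_ne_zero _))
    (fun i => ∑ j ∈ range s, ρ ⟨(i + j) % n, Nat.mod_lt _ hn⟩)

/-- The cyclic rotation of a sample by `k`. -/
def rotate {n : ℕ} (k : Fin n) (ρ : Fin n → ℝ) : Fin n → ℝ := fun i => ρ (i + k)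

lemma lt_circScan_iff {n : ℕ} (s : ℕ) (hn : 0 < n) (ρ : Fin n → ℝ) (x : ℝ) :
    x < circScan s hn ρ ↔
      ∃ i : Fin n, x < ∑ j ∈ range s, ρ ⟨((i : ℕ) + j) % n, Nat.mod_lt _ hn⟩ := by
  simp [circScan, Finset.lt_sup'_iff]

lemma lt_linScan_iff {n : ℕ} (s : ℕ) (hn : 0 < n) (ρ : Fin n → ℝ) (x : ℝ) :
    x < linScan s hn ρ ↔
      ∃ i < n - s + 1, x < ∑ j ∈ range s, ρ ⟨(i + j) % n, Nat.mod_lt _ hn⟩ := by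
  simp only [linScan, Finset.lt_sup'_iff, mem_range]

lemma measurableSet_lt_linScan {n : ℕ} (s : ℕ) (hn : 0 < n) (x : ℝ) :
    MeasurableSet {ρ : Fin n → ℝ | x < linScan s hn ρ} := by
  have h : {ρ : Fin n → ℝ | x < linScan s hn ρ} = ⋃ i ∈ range (n - s + 1),
      {ρ | x < ∑ j ∈ range s, ρ ⟨(i + j) % n, Nat.mod_lt _ hn⟩} := by
    ext ρ
    simp only [Set.mem_ofPred_eq, lt_linScan_iff, Set.mem_iUnion, mem_range, exists_prop]
  rw [h]
  refine Finset.measurableSet_biUnion _ fun i _ => ?_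
  exact measurableSet_lt measurable_const (by fun_prop)

lemma measurePreserving_rotate {n : ℕ} (μ : Measure ℝ) [IsProbabilityMeasure μ] (k : Fin n) :
    MeasurePreserving (rotate k) (Measure.pi fun _ : Fin n => μ)
      (Measure.pi fun _ : Fin n => μ) := by
  have : NeZero n := ⟨(Fin.pos k).ne'⟩
  have h := measurePreserving_piCongrLeft (fun _ : Fin n => μ) (Equiv.addRight k).symm
  convert h using 1
  funext ρ i
  have := MeasurableEquiv.piCongrLeft_apply_apply (β := fun _ : Fin n => ℝ)
    (Equiv.addRight k).symm ρ (i + k)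
  simpa [rotate] using this.symm

/-- On the circular event, at least `n - s` of the `n` rotations produce a linear exceedance. -/
lemma card_rotations {n s : ℕ} (hn : 0 < n) {ρ : Fin n → ℝ} {x : ℝ}
    (h : x < circScan s hn ρ) :
    n - s ≤ #{k : Fin n | x < linScan s hn (rotate k ρ)} := by
  obtain ⟨i, hi⟩ := (lt_circScan_iff s hn ρ x).1 h
  -- Adding `n` keeps the natural subtraction `i - t` from truncating.
  let f : ℕ → Fin n := fun t => ⟨(i + n - t) % n, Nat.mod_lt _ hn⟩
  have key : ∀ t < n, ((i : ℕ) + n - t) % n + t ≡ i [MOD n] := by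
    intro t ht
    calc ((i : ℕ) + n - t) % n + t ≡ (i + n - t) + t [MOD n] := (Nat.mod_modEq _ _).add_right _
      _ = i + n := by omega
      _ ≡ i [MOD n] := by simp [Nat.ModEq]
  conv_lhs => rw [← card_range (n - s)]
  refine card_le_card_of_injOn f ?_ ?_
  · intro t ht
    have ht' : t < n - s := by simpa using ht
    simp only [coe_filter, mem_univ, true_and, Set.mem_ofPred_eq, lt_linScan_iff]
    refine ⟨t, by omega, ?_⟩
    convert hi using 3 with j
    simp only [rotate]
    congr 1
    apply Fin.ext
    simp only [Fin.val_add, f]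
    calc ((t + j) % n + (i + n - t) % n) % n
        = ((t + j) + (i + n - t) % n) % n := by simp
      _ = (((i + n - t) % n + t) + j) % n := by congr 1; omega
      _ = (i + j) % n := (key t (by omega)).add_right j
  · intro t ht u hu htu
    have ht' : t < n - s := by simpa using ht
    have hu' : u < n - s := by simpa using hu
    have htu' : ((i : ℕ) + n - t) % n = (i + n - u) % n := congrArg Fin.val htu
    have h1 := (key t (by omega)).trans (key u (by omega)).symm
    rw [htu'] at h1
    exact (Nat.ModEq.add_left_cancel' _ h1).eq_of_lt_of_lt (by omega) (by omega)

/-- For `n` i.i.d. nonnegative demands and `1 ≤ s < n`, for every `x`: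
`Pr(S_s > x) ≤ Pr(S_s^{(c)} > x) ≤ (n/(n-s)) Pr(S_s > x)`, where `S_s` is the linear
and `S_s^{(c)}` the circular `s`-scan statistic. -/
theorem stmt12 (n s : ℕ) (hn : 0 < n) (hs : 1 ≤ s) (hsn : s < n)
    (μ : Measure ℝ) [IsProbabilityMeasure μ] (hμ : μ (Set.Iio 0) = 0) (x : ℝ) :
    (Measure.pi fun _ : Fin n => μ) {ρ | x < linScan s hn ρ} ≤
        (Measure.pi fun _ : Fin n => μ) {ρ | x < circScan s hn ρ} ∧
      (Measure.pi fun _ : Fin n => μ) {ρ | x < circScan s hn ρ} ≤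
        ((n : ℝ≥0∞) / ((n - s : ℕ) : ℝ≥0∞)) *
          (Measure.pi fun _ : Fin n => μ) {ρ | x < linScan s hn ρ} := by
  constructor
  · refine measure_mono fun ρ hρ => ?_
    obtain ⟨i, hi, h⟩ := (lt_linScan_iff s hn ρ x).1 hρ
    exact (lt_circScan_iff s hn ρ x).2 ⟨⟨i, by omega⟩, h⟩
  · set P := Measure.pi fun _ : Fin n => μ
    set L := {ρ : Fin n → ℝ | x < linScan s hn ρ}
    set C := {ρ : Fin n → ℝ | x < circScan s hn ρ}
    have hL : MeasurableSet L := measurableSet_lt_linScan s hn x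
    have hLk : ∀ k : Fin n, MeasurableSet (rotate k ⁻¹' L) := fun k =>
      (measurePreserving_rotate μ k).measurable hL
    let N : (Fin n → ℝ) → ℝ≥0∞ := fun ρ => ∑ k : Fin n, (rotate k ⁻¹' L).indicator 1 ρ
    have hN : ∫⁻ ρ, N ρ ∂P = n * P L := by
      rw [lintegral_finsetSum _ fun k _ => measurable_one.indicator (hLk k)]
      have hk : ∀ k : Fin n, ∫⁻ ρ, (rotate k ⁻¹' L).indicator 1 ρ ∂P = P L := fun k =>
        (lintegral_indicator_one (hLk k)).trans
          ((measurePreserving_rotate μ k).measure_preimage hL.nullMeasurableSet)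
      simp [hk]
    have hCN : C ⊆ {ρ | ((n - s : ℕ) : ℝ≥0∞) ≤ N ρ} := by
      intro ρ hρ
      have h := card_rotations hn hρ
      have hNρ : N ρ = (#{k : Fin n | x < linScan s hn (rotate k ρ)} : ℕ) := by
        simp [N, L, Set.indicator_apply]
      rw [Set.mem_ofPred_eq, hNρ]
      exact_mod_cast h
    have hmain : ((n - s : ℕ) : ℝ≥0∞) * P C ≤ n * P L := by
      rw [← hN]
      exact (mul_le_mul_right (measure_mono hCN) _).trans (mul_meas_ge_le_lintegral
        (Finset.measurable_sum _ fun k _ => measurable_one.indicator (hLk k)) _)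
    have hpos : ((n - s : ℕ) : ℝ≥0∞) ≠ 0 := by
      exact_mod_cast (Nat.sub_pos_of_lt hsn).ne'
    rw [← ENNReal.mul_div_right_comm,
      ENNReal.le_div_iff_mul_le (.inl hpos) (.inl (ENNReal.natCast_ne_top _)), mul_comm]
    exact hmain
end

section
/- Let ρ_1,…,ρ_n be i.i.d. nonnegative random variables and 1 ≤ s < n. Then Pr(S_s^{(c)} > S_s) ≤ s/n; consequently, if s is fixed (or s = o(n)) then S_s^{(c)} − S_s → 0 in probability as n → ∞. -/
/-!
The law of an i.i.d. vector on the cycle `Fin n` is invariant under cyclic shifts, and shifting the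
vector shifts its window sums. The circular statistic exceeds the linear one only if every
maximizing window wraps around, that is, starts at one of the last `s - 1` positions. Fix a
configuration `ρ` and one maximizing window `m` of it. Among the `n` shifts of `ρ`, only those which
move `m` to one of these positions can lie in the event, so there are at most `s` of them
(`card_shift_mem_le`). Integrating this count, and using that each shift has the same law, gives
`n * Pr ≤ s` (`measure_linScan_lt_circScan_le`). Convergence in probability follows because
`{ε < S^{(c)} - S}` is contained in `{S < S^{(c)}}`.
-/

open MeasureTheory Finset Filter Asymptotics
open scoped ENNReal

/-- The sum over the circular window of length `s` starting at `i`. -/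
def windowSum {n : ℕ} (s : ℕ) (hn : 0 < n) (ρ : Fin n → ℝ) (i : Fin n) : ℝ :=
  ∑ j ∈ range s, ρ ⟨((i : ℕ) + j) % n, Nat.mod_lt _ hn⟩

lemma windowSum_shift {n : ℕ} [NeZero n] (s : ℕ) (hn : 0 < n) (ρ : Fin n → ℝ) (k i : Fin n) :
    windowSum s hn (fun l => ρ (l + k)) i = windowSum s hn ρ (i + k) := by
  unfold windowSum
  refine Finset.sum_congr rfl fun j _ => congrArg ρ (Fin.ext ?_)
  simp only [Fin.val_add, Nat.mod_add_mod]
  congr 1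
  ring

/-- When the two statistics differ, every maximizing circular window wraps around. -/
lemma lt_of_windowSum_max {n : ℕ} (s : ℕ) (hn : 0 < n) (ρ : Fin n → ℝ)
    (h : linScan s hn ρ < circScan s hn ρ) (m : Fin n)
    (hm : ∀ i, windowSum s hn ρ i ≤ windowSum s hn ρ m) : n - s < (m : ℕ) := by
  by_contra! hle
  have h1 : windowSum s hn ρ m ≤ linScan s hn ρ :=
    Finset.le_sup' (fun i : ℕ => ∑ j ∈ range s, ρ ⟨(i + j) % n, Nat.mod_lt _ hn⟩)
      (Finset.mem_range.mpr (Nat.lt_succ_of_le hle))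
  have h2 : circScan s hn ρ ≤ windowSum s hn ρ m := Finset.sup'_le _ _ fun i _ => hm i
  linarith

lemma card_wrapping_le {n : ℕ} (s : ℕ) :
    #{j : Fin n | n - s < (j : ℕ)} ≤ s := by
  have h : #{j : Fin n | n - s < (j : ℕ)} ≤ #(Finset.Ioo (n - s) n) := by
    refine Finset.card_le_card_of_injOn (fun j : Fin n => (j : ℕ)) ?_ ?_
    · intro j hj
      have hj' : n - s < (j : ℕ) := by simpa using hj
      simpa using hj'
    · exact fun a _ b _ hab => Fin.ext hab
  rw [Nat.card_Ioo] at h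
  omega

open Classical in
/-- At most `s` of the `n` cyclic shifts of a fixed configuration make the two statistics differ. -/
lemma card_shift_mem_le {n : ℕ} [NeZero n] (s : ℕ) (hn : 0 < n) (ρ : Fin n → ℝ) :
    #{k : Fin n | linScan s hn (fun l => ρ (l + k)) < circScan s hn (fun l => ρ (l + k))} ≤ s := by
  obtain ⟨m, hm⟩ := Finite.exists_max (windowSum s hn ρ)
  refine le_trans ?_ (card_wrapping_le (n := n) s)
  refine Finset.card_le_card_of_injOn (fun k => m - k) ?_ ?_
  · intro k hk
    have hk' : linScan s hn (fun l => ρ (l + k)) < circScan s hn (fun l => ρ (l + k)) := by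
      simpa using hk
    have := lt_of_windowSum_max s hn _ hk' (m - k) (fun i => by
      simpa [windowSum_shift] using hm (i + k))
    simpa using this
  · exact fun a _ b _ hab => sub_right_injective hab

lemma measurable_circScan {n : ℕ} (s : ℕ) (hn : 0 < n) :
    Measurable (circScan s hn : (Fin n → ℝ) → ℝ) := by
  have : (circScan s hn : (Fin n → ℝ) → ℝ) = univ.sup' (univ_nonempty_iff.mpr ⟨⟨0, hn⟩⟩)
      (fun (i : Fin n) (ρ : Fin n → ℝ) =>
        ∑ j ∈ range s, ρ ⟨((i : ℕ) + j) % n, Nat.mod_lt _ hn⟩) := by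
    ext ρ
    simp [circScan, Finset.sup'_apply]
  rw [this]
  exact Finset.measurable_sup' _ fun i _ => by fun_prop

lemma measurable_linScan {n : ℕ} (s : ℕ) (hn : 0 < n) :
    Measurable (linScan s hn : (Fin n → ℝ) → ℝ) := by
  have : (linScan s hn : (Fin n → ℝ) → ℝ) =
      (range (n - s + 1)).sup' (nonempty_range_iff.mpr (Nat.succ_ne_zero _))
      (fun (i : ℕ) (ρ : Fin n → ℝ) => ∑ j ∈ range s, ρ ⟨(i + j) % n, Nat.mod_lt _ hn⟩) := by
    ext ρ
    simp [linScan, Finset.sup'_apply]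
  rw [this]
  exact Finset.measurable_sup' _ fun i _ => by fun_prop

lemma measurePreserving_shift {n : ℕ} [NeZero n] (μ : Measure ℝ) [IsProbabilityMeasure μ]
    (k : Fin n) : MeasurePreserving (fun (ρ : Fin n → ℝ) l => ρ (l + k))
      (Measure.pi fun _ : Fin n => μ) (Measure.pi fun _ : Fin n => μ) :=
  measurePreserving_arrowCongr' (fun _ => μ) (fun _ => μ) (Equiv.addRight k).symm
    (MeasurableEquiv.refl ℝ) (fun _ => MeasurePreserving.id μ)

/-- The bound `Pr(S_s < S_s^{(c)}) ≤ s / n`, by averaging over all cyclic shifts. -/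
lemma measure_linScan_lt_circScan_le (μ : Measure ℝ) [IsProbabilityMeasure μ] (n s : ℕ)
    (hn : 0 < n) :
    (Measure.pi fun _ : Fin n => μ) {ρ | linScan s hn ρ < circScan s hn ρ} ≤
      (s : ℝ≥0∞) / (n : ℝ≥0∞) := by
  classical
  have : NeZero n := ⟨hn.ne'⟩
  set P := Measure.pi fun _ : Fin n => μ
  set A : Set (Fin n → ℝ) := {ρ | linScan s hn ρ < circScan s hn ρ} with hA_def
  have hA : MeasurableSet A := measurableSet_lt (measurable_linScan s hn) (measurable_circScan s hn)
  have hshift (k : Fin n) : MeasurableSet ((fun (ρ : Fin n → ℝ) l => ρ (l + k)) ⁻¹' A) :=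
    (measurePreserving_shift μ k).measurable hA
  have key : (n : ℝ≥0∞) * P A ≤ s := by
    calc (n : ℝ≥0∞) * P A
        = ∑ k : Fin n, P ((fun (ρ : Fin n → ℝ) l => ρ (l + k)) ⁻¹' A) := by
          simp [P, fun k => (measurePreserving_shift μ k).measure_preimage hA.nullMeasurableSet]
      _ = ∫⁻ ρ, ∑ k : Fin n,
            ((fun (ρ : Fin n → ℝ) l => ρ (l + k)) ⁻¹' A).indicator (fun _ => (1 : ℝ≥0∞)) ρ ∂P := by
          rw [lintegral_finsetSum _ fun k _ => measurable_const.indicator (hshift k)]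
          refine Finset.sum_congr rfl fun k _ => ?_
          rw [lintegral_indicator (hshift k)]
          simp
      _ ≤ ∫⁻ _, (s : ℝ≥0∞) ∂P := by
          refine lintegral_mono fun ρ => ?_
          simp only [Set.indicator_apply, Finset.sum_boole]
          exact_mod_cast card_shift_mem_le s hn ρ
      _ = s := by simp [P]
  rw [ENNReal.le_div_iff_mul_le (Or.inl (by exact_mod_cast hn.ne'))
    (Or.inl (ENNReal.natCast_ne_top n)), mul_comm]
  exact key

/-- For i.i.d. nonnegative demands: (i) for `1 ≤ s < n`, `Pr(S_s^{(c)} > S_s) ≤ s/n`;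
(ii) consequently, along any sequence of window sizes `s n` with `1 ≤ s n < n`
eventually and `s n = o(n)` (which covers a fixed `s`), the difference
`S_{s n}^{(c)} - S_{s n} → 0` in probability as `n → ∞`. -/
theorem stmt13 (μ : Measure ℝ) [IsProbabilityMeasure μ] (hμ : μ (Set.Iio 0) = 0) :
    (∀ (n s : ℕ) (hn : 0 < n), 1 ≤ s → s < n →
      (Measure.pi fun _ : Fin n => μ) {ρ | linScan s hn ρ < circScan s hn ρ} ≤
        (s : ℝ≥0∞) / (n : ℝ≥0∞)) ∧
    (∀ s : ℕ → ℕ, (∀ n, 1 ≤ s n) → (∀ᶠ n : ℕ in atTop, s n < n) →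
      (fun n : ℕ => (s n : ℝ)) =o[atTop] (fun n : ℕ => (n : ℝ)) →
      ∀ ε : ℝ, 0 < ε →
        Tendsto
          (fun n : ℕ =>
            if hn : 0 < n then
              (Measure.pi fun _ : Fin n => μ)
                {ρ | ε < circScan (s n) hn ρ - linScan (s n) hn ρ}
            else 0)
          atTop (nhds 0)) := by
  refine ⟨fun n s hn _ _ => measure_linScan_lt_circScan_le μ n s hn, ?_⟩
  intro s _ _ hs ε hε
  have hlim : Tendsto (fun n : ℕ => (s n : ℝ≥0∞) / (n : ℝ≥0∞)) atTop (nhds 0) := by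
    have h := ENNReal.tendsto_ofReal hs.tendsto_div_nhds_zero
    rw [ENNReal.ofReal_zero] at h
    refine h.congr' ?_
    filter_upwards [eventually_gt_atTop 0] with n hn
    rw [ENNReal.ofReal_div_of_pos (by exact_mod_cast hn)]
    simp
  refine tendsto_of_tendsto_of_tendsto_of_le_of_le tendsto_const_nhds hlim
    (fun _ => zero_le) fun n => ?_
  dsimp only
  split_ifs with hn
  · refine le_trans (measure_mono fun ρ hρ => ?_) (measure_linScan_lt_circScan_le μ n (s n) hn)
    have hρ' : ε < circScan (s n) hn ρ - linScan (s n) hn ρ := hρ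
    change linScan (s n) hn ρ < circScan (s n) hn ρ
    linarith
  · exact zero_le
end

section
/- In a d-choice allocation of n objects on n nodes with cyclic design and i.i.d. demands, the robustness satisfies Pr(S_d^{(c)} ≤ m·d) ≤ P ≤ min_{1 ≤ s ≤ n−d+1} Pr(S_s^{(c)} ≤ m·(s + d − 1)), where S_s^{(c)} is the circular s-scan statistic of the demands. -/
/-!
Both inequalities come from inclusions of events, the first one up to a null set.

*Lower bound.* If all demands are nonnegative (which holds almost surely) and every cyclic window
of `d` consecutive demands sums to at most `m * d`, splitting each demand evenly over its `d` nodes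
is feasible: the objects stored on node `u` all lie in the window of length `d` ending at `u`, so
`u` carries at most `m * d / d` (`servable_of_circScan_le`).

*Upper bound.* The `s` objects of a window use only the `s + d - 1` nodes of the window with the
same start, and these can serve a total of at most `m * (s + d - 1)` (`circScan_le_of_servable`).
Here `s ≤ n` is needed, so that no object of the window is counted twice.
-/


open MeasureTheory Finset
open scoped ENNReal

/-- Cyclic design: object `i` is stored on nodes `i, i+1, …, i+d-1 (mod n)`. -/
def CyclicDesign {n : ℕ} (d : ℕ) (C : Fin n → Finset (Fin n)) : Prop :=
  ∀ i : Fin n,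
    C i = (range d).image fun j => (⟨((i : ℕ) + j) % n, Nat.mod_lt _ i.pos⟩ : Fin n)

/-- The cyclic window `i, i+1, …, i+s-1 (mod n)`. -/
def cyclicWindow {n : ℕ} (hn : 0 < n) (i s : ℕ) : Finset (Fin n) :=
  (range s).image fun j => (⟨(i + j) % n, Nat.mod_lt _ hn⟩ : Fin n)

theorem cyclicWindow_injOn {n : ℕ} (hn : 0 < n) (i s : ℕ) (hs : s ≤ n) :
    Set.InjOn (fun j => (⟨(i + j) % n, Nat.mod_lt _ hn⟩ : Fin n)) (range s : Finset ℕ) := by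
  intro a ha b hb hab
  have ha' : a < s := by simpa using ha
  have hb' : b < s := by simpa using hb
  have h : i + a ≡ i + b [MOD n] := Fin.ext_iff.mp hab
  exact (Nat.ModEq.add_left_cancel' i h).eq_of_lt_of_lt (by omega) (by omega)

theorem sum_cyclicWindow {n : ℕ} (hn : 0 < n) (i s : ℕ) (hs : s ≤ n) (f : Fin n → ℝ) :
    ∑ k ∈ cyclicWindow hn i s, f k =
      ∑ j ∈ range s, f ⟨(i + j) % n, Nat.mod_lt _ hn⟩ :=
  Finset.sum_image (cyclicWindow_injOn hn i s hs)

theorem card_cyclicWindow_le {n : ℕ} (hn : 0 < n) (i s : ℕ) :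
    (cyclicWindow hn i s : Finset (Fin n)).card ≤ s := by
  simpa [cyclicWindow] using Finset.card_image_le (s := range s)
    (f := fun j => (⟨(i + j) % n, Nat.mod_lt _ hn⟩ : Fin n))

theorem circScan_le_iff {n : ℕ} (s : ℕ) (hn : 0 < n) (ρ : Fin n → ℝ) (c : ℝ) (hs : s ≤ n) :
    circScan s hn ρ ≤ c ↔ ∀ i : Fin n, ∑ k ∈ cyclicWindow hn i s, ρ k ≤ c := by
  simp [circScan, sum_cyclicWindow hn _ s hs]

theorem servable_of_circScan_le {n d : ℕ} (hn : 0 < n) (hd : 1 ≤ d) (hdn : d ≤ n)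
    {C : Fin n → Finset (Fin n)} (hC : ∀ i : Fin n, C i = cyclicWindow hn i d)
    {m : ℝ} {ρ : Fin n → ℝ} (hρ : ∀ i, 0 ≤ ρ i) (h : circScan d hn ρ ≤ m * d) :
    Servable C m ρ := by
  have hd0 : (0 : ℝ) < d := by exact_mod_cast hd
  refine ⟨fun i u => if u ∈ C i then ρ i / d else 0, ?_, ?_, ?_, ?_⟩
  · intro i u
    dsimp only
    split_ifs
    · exact div_nonneg (hρ i) hd0.le
    · exact le_rfl
  · intro i u hu
    simp [hu]
  · intro i
    rw [Finset.sum_congr rfl (fun u hu => if_pos hu), hC, sum_cyclicWindow hn _ d hdn]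
    simp only [Finset.sum_const, Finset.card_range, nsmul_eq_mul]
    field_simp
  · intro u
    rw [Finset.sum_congr rfl (fun i hi => if_pos (Finset.mem_filter.mp hi).2),
      ← Finset.sum_div, div_le_iff₀ hd0]
    -- The start of the window of length `d` ending at `u`.
    let v : Fin n := ⟨(u + (n - d + 1)) % n, Nat.mod_lt _ hn⟩
    refine le_trans (Finset.sum_le_sum_of_subset_of_nonneg ?_ (fun i _ _ => hρ i))
      ((circScan_le_iff d hn ρ _ hdn).mp h v)
    intro i hi
    have hu := (Finset.mem_filter.mp hi).2
    rw [hC] at hu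
    obtain ⟨j, hj, rfl⟩ := Finset.mem_image.mp hu
    have hj' : j < d := by simpa using hj
    refine Finset.mem_image.mpr ⟨d - 1 - j, by simp; omega, ?_⟩
    apply Fin.ext
    have e : (i : ℕ) + j + (n - d + 1) + (d - 1 - j) = i + n := by omega
    simp only [v, Nat.mod_add_mod]
    rw [e, Nat.add_mod_right, Nat.mod_eq_of_lt i.isLt]

theorem circScan_le_of_servable {n d s : ℕ} (hn : 0 < n) (hd : 1 ≤ d) (hs : 1 ≤ s) (hsn : s ≤ n)
    {C : Fin n → Finset (Fin n)} (hC : ∀ i : Fin n, C i = cyclicWindow hn i d)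
    {m : ℝ} (hm : 0 < m) {ρ : Fin n → ℝ} (h : Servable C m ρ) :
    circScan s hn ρ ≤ m * ((s : ℝ) + (d : ℝ) - 1) := by
  obtain ⟨x, hx0, hxC, hxρ, hxm⟩ := h
  rw [circScan_le_iff s hn ρ _ hsn]
  intro i
  have hsub : ∀ k ∈ cyclicWindow hn i s, C k ⊆ cyclicWindow hn i (s + d - 1) := by
    intro k hk u hu
    rw [hC] at hu
    obtain ⟨j, hj, rfl⟩ := Finset.mem_image.mp hk
    obtain ⟨l, hl, rfl⟩ := Finset.mem_image.mp hu
    rw [Finset.mem_range] at hj hl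
    refine Finset.mem_image.mpr ⟨j + l, by simp; omega, ?_⟩
    simp [Nat.add_assoc]
  have hcard : ((cyclicWindow hn i (s + d - 1) : Finset (Fin n)).card : ℝ) ≤ s + d - 1 := by
    have h1 := card_cyclicWindow_le hn i (s + d - 1)
    have h2 : (cyclicWindow hn i (s + d - 1) : Finset (Fin n)).card + 1 ≤ s + d := by omega
    have h3 : ((cyclicWindow hn i (s + d - 1) : Finset (Fin n)).card : ℝ) + 1 ≤ s + d := by
      exact_mod_cast h2
    linarith
  calc ∑ k ∈ cyclicWindow hn i s, ρ k
      = ∑ k ∈ cyclicWindow hn i s, ∑ u ∈ cyclicWindow hn i (s + d - 1), x k u := by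
        refine Finset.sum_congr rfl fun k hk => ?_
        rw [← hxρ k]
        exact Finset.sum_subset (hsub k hk) fun u _ hu => hxC k u hu
    _ = ∑ u ∈ cyclicWindow hn i (s + d - 1), ∑ k ∈ cyclicWindow hn i s, x k u :=
        Finset.sum_comm
    _ ≤ ∑ u ∈ cyclicWindow hn i (s + d - 1), m := by
        refine Finset.sum_le_sum fun u _ => ?_
        refine le_trans ?_ (hxm u)
        rw [Finset.sum_filter_of_ne (fun k _ hk => not_imp_comm.mp (hxC k u) hk)]
        exact Finset.sum_le_sum_of_subset_of_nonneg (Finset.subset_univ _)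
          (fun k _ _ => hx0 k u)
    _ ≤ m * ((s : ℝ) + (d : ℝ) - 1) := by
        rw [Finset.sum_const, nsmul_eq_mul, mul_comm]
        exact mul_le_mul_of_nonneg_left hcard hm.le

/-- In a `d`-choice allocation with cyclic design, with i.i.d. demands, the robustness `P`
satisfies `Pr(S_d^{(c)} ≤ m·d) ≤ P` and, for every `1 ≤ s ≤ n - d + 1`,
`P ≤ Pr(S_s^{(c)} ≤ m·(s + d - 1))`. -/
theorem stmt16 (n d : ℕ) (hn : 0 < n) (hd : 1 ≤ d) (hdn : d ≤ n)
    (C : Fin n → Finset (Fin n)) (hC : CyclicDesign d C)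
    (m : ℝ) (hm0 : 0 < m) (hm1 : m ≤ 1)
    (μ : Measure ℝ) [IsProbabilityMeasure μ] (hμ : μ (Set.Iio 0) = 0) :
    (Measure.pi fun _ : Fin n => μ) {ρ | circScan d hn ρ ≤ m * d} ≤
        (Measure.pi fun _ : Fin n => μ) {ρ | Servable C m ρ} ∧
      ∀ s : ℕ, 1 ≤ s → s ≤ n - d + 1 →
        (Measure.pi fun _ : Fin n => μ) {ρ | Servable C m ρ} ≤
          (Measure.pi fun _ : Fin n => μ)
            {ρ | circScan s hn ρ ≤ m * ((s : ℝ) + (d : ℝ) - 1)} := by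
  have hC' : ∀ i : Fin n, C i = cyclicWindow hn i d := hC
  constructor
  · have hpos : ∀ᵐ ρ ∂(Measure.pi fun _ : Fin n => μ), ∀ i, 0 ≤ ρ i := by
      rw [ae_all_iff]
      intro i
      have h0 : ∀ᵐ t ∂μ, 0 ≤ t := by
        rw [ae_iff]
        simpa [Set.Iio] using hμ
      exact (Measure.tendsto_eval_ae_ae (μ := fun _ : Fin n => μ) (i := i)).eventually h0
    refine measure_mono_ae ?_
    filter_upwards [hpos] with ρ hρ h
    exact servable_of_circScan_le hn hd hdn hC' hρ h
  · intro s hs hsn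
    exact measure_mono fun ρ h =>
      circScan_le_of_servable hn hd hs (by omega) hC' hm0 h
end
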